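/- Let 1 ≤ m ≤ d and let f : [0,1]^d → ℝ^m be a non-constant C¹ function. Set γ = 2 + 4·d^{d+1/2}·(d+1)⁴ and β_f(δ) = ω_{Df}(√d·δ)·(1 + √d·δ + 4·d^{d+1/2}·(d+1)⁴). Then for every ε > 0 small enough that β_f^{−1}(ε) ≤ 1/√d, one has N_f(ε) ≤ d^{3/2}·2^{3d−1}·d! · (1/Ψ_{Df}(ε/γ)). -/

import Mathlib

open MeasureTheory Set Topology
open scoped ENNReal

noncomputable section

abbrev E (n : ℕ) : Type := EuclideanSpace ℝ (Fin n)

def unitCube (d : ℕ) : Set (E d) := {x | ∀ i, x i ∈ Set.Icc (0:ℝ) 1}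

def openCube (d : ℕ) : Set (E d) := {x | ∀ i, x i ∈ Set.Ioo (0:ℝ) 1}

/-- Jacobian matrix of `f` at `x`. -/
def jac {d m : ℕ} (f : E d → E m) (x : E d) : Matrix (Fin m) (Fin d) ℝ :=
  Matrix.of fun i j => fderiv ℝ f x (EuclideanSpace.single j 1) i

/-- Critical set of `g` in the open unit cube. -/
def critSet {d m : ℕ} (g : E d → E m) : Set (E d) :=
  {x ∈ openCube d | (jac g x).rank ≤ m - 1}

/-- `N_f(ε)`. -/
def Nf {d m : ℕ} (f : E d → E m) (ε : ℝ) : ℝ≥0∞ :=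
  sInf { h : ℝ≥0∞ | ∃ g : E d → E m, ContDiff ℝ 1 g ∧
    (∀ x ∈ unitCube d, ‖g x - f x‖ ≤ ε ∧ ‖fderiv ℝ g x - fderiv ℝ f x‖ ≤ ε) ∧
    h = μH[(d:ℝ) - 1] (critSet g) }

/-- minimal modulus of continuity of `Df` on `U`. -/
def omegaC1 {d m : ℕ} (f : E d → E m) (U : Set (E d)) (δ : ℝ) : ℝ :=
  sSup {r : ℝ | ∃ x ∈ U, ∃ y ∈ U, ‖x - y‖ ≤ δ ∧ r = ‖fderiv ℝ f x - fderiv ℝ f y‖}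

def betaf {d m : ℕ} (f : E d → E m) (δ : ℝ) : ℝ :=
  omegaC1 f (unitCube d) (Real.sqrt d * δ) *
    (1 + Real.sqrt d * δ + 4 * (d:ℝ) ^ ((d:ℝ) + 1/2) * ((d:ℝ)+1)^4)

end

noncomputable section

/-- Inverse of the minimal modulus of continuity of `h` on `U`:
`Ψ_h(s) = sup{δ ≥ 0 : |h(x)−h(y)| ≤ s whenever x,y ∈ U, |x−y| ≤ δ}`
(taking the supremum in `[0,∞]`). -/
def PsiInv {X Y : Type*} [PseudoEMetricSpace X] [PseudoMetricSpace Y]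
    (h : X → Y) (U : Set X) (s : ℝ) : ℝ≥0∞ :=
  sSup {δ : ℝ≥0∞ | ∀ x ∈ U, ∀ y ∈ U, edist x y ≤ δ → dist (h x) (h y) ≤ s}

open Filter in
lemma stek_fderiv {d m : ℕ} (h : E d → E m) (hh : ContDiff ℝ 1 h) (v : E d) :
    ContDiff ℝ 1 (fun x => ∫ t in (0:ℝ)..1, h (x + t • v)) ∧
    ∀ x, fderiv ℝ (fun x => ∫ t in (0:ℝ)..1, h (x + t • v)) x
      = ∫ t in (0:ℝ)..1, fderiv ℝ h (x + t • v) := by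
  have hc : Continuous h := hh.continuous
  have hd : Differentiable ℝ h := hh.differentiable (by norm_num)
  have hdc : Continuous (fderiv ℝ h) := hh.continuous_fderiv (by norm_num)
  have key : ∀ x₀, HasFDerivAt (fun x => ∫ t in (0:ℝ)..1, h (x + t • v))
      (∫ t in (0:ℝ)..1, fderiv ℝ h (x₀ + t • v)) x₀ := by
    intro x₀
    have hK : IsCompact (Metric.closedBall x₀ 1 ×ˢ Set.Icc (0:ℝ) 1) :=
      (isCompact_closedBall x₀ 1).prod isCompact_Icc
    obtain ⟨C, hC⟩ := hK.exists_bound_of_continuousOn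
      (f := fun p : E d × ℝ => fderiv ℝ h (p.1 + p.2 • v))
      (Continuous.continuousOn (by fun_prop))
    refine intervalIntegral.hasFDerivAt_integral_of_dominated_of_fderiv_le
      (F := fun x t => h (x + t • v)) (F' := fun x t => fderiv ℝ h (x + t • v))
      (bound := fun _ => C) (s := Metric.ball x₀ 1) (Metric.ball_mem_nhds _ one_pos)
      ?_ ?_ ?_ ?_ ?_ ?_
    · exact Eventually.of_forall fun x => Continuous.aestronglyMeasurable (by fun_prop)
    · exact Continuous.intervalIntegrable (by fun_prop) _ _
    · exact Continuous.aestronglyMeasurable (by fun_prop)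
    · refine Eventually.of_forall fun t ht x hx => ?_
      rw [Set.uIoc_of_le zero_le_one] at ht
      exact hC (x, t) ⟨Metric.ball_subset_closedBall hx, ht.1.le, ht.2⟩
    · exact intervalIntegrable_const
    · refine Eventually.of_forall fun t ht x hx => ?_
      have := (hd (x + t • v)).hasFDerivAt
      have h2 : HasFDerivAt (fun x : E d => x + t • v) (ContinuousLinearMap.id ℝ (E d)) x :=
        (hasFDerivAt_id x).add_const (t • v)
      have h3 := HasFDerivAt.comp x this h2
      rw [ContinuousLinearMap.comp_id] at h3
      exact h3
  refine ⟨?_, fun x => (key x).fderiv⟩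
  rw [contDiff_one_iff_fderiv]
  refine ⟨fun x => (key x).differentiableAt, ?_⟩
  have : fderiv ℝ (fun x => ∫ t in (0:ℝ)..1, h (x + t • v))
      = fun x => ∫ t in (0:ℝ)..1, fderiv ℝ h (x + t • v) := by
    ext1 x; exact (key x).fderiv
  rw [this]
  exact intervalIntegral.continuous_parametric_intervalIntegral_of_continuous'
    (by fun_prop) 0 1

def domJ (d : ℕ) (θ : ℝ) (J : Finset (Fin d)) : Set (E d) :=
  {x | ∀ i, 0 ≤ x i ∧ x i ≤ if i ∈ J then 1 else 1 + θ}

lemma avg_bound {F : Type*} [NormedAddCommGroup F] [NormedSpace ℝ F]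
    (u : ℝ → F) (C : ℝ) (h : ∀ t ∈ Set.Icc (0:ℝ) 1, ‖u t‖ ≤ C) :
    ‖∫ t in (0:ℝ)..1, u t‖ ≤ C := by
  have := intervalIntegral.norm_integral_le_of_norm_le_const (f := u) (a := 0) (b := 1) (C := C)
    (fun t ht => h t (by rw [Set.uIoc_of_le zero_le_one] at ht; exact ⟨ht.1.le, ht.2⟩))
  simpa using this

lemma shift_bound {F : Type*} [NormedAddCommGroup F] [NormedSpace ℝ F]
    (Φ : ℝ → F) (hΦ : Continuous Φ) (θ s a b : ℝ) (hθ : 0 < θ)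
    (h : ∀ t ∈ Set.uIcc a b, ‖Φ (t + θ) - Φ t‖ ≤ s) :
    ‖(∫ t in (0:ℝ)..1, Φ (a + t * θ)) - ∫ t in (0:ℝ)..1, Φ (b + t * θ)‖ ≤ s / θ * |a - b| := by
  have h1 : ∀ c : ℝ, (∫ t in (0:ℝ)..1, Φ (c + t * θ)) = θ⁻¹ • ∫ t in c..(c + θ), Φ t := by
    intro c
    have := intervalIntegral.integral_comp_add_mul (a := 0) (b := 1) Φ hθ.ne' c
    simpa [mul_comm] using this
  have hi : ∀ p q : ℝ, IntervalIntegrable Φ volume p q := fun p q => hΦ.intervalIntegrable p q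
  have h2 : (∫ t in a..(a + θ), Φ t) - (∫ t in b..(b + θ), Φ t)
      = ∫ t in b..a, (Φ (t + θ) - Φ t) := by
    rw [intervalIntegral.integral_sub (Continuous.intervalIntegrable (by fun_prop) _ _) (hi _ _),
      intervalIntegral.integral_comp_add_right]
    have e1 := intervalIntegral.integral_add_adjacent_intervals (hi b a) (hi a (a+θ))
    have e2 := intervalIntegral.integral_add_adjacent_intervals (hi b (b+θ)) (hi (b+θ) (a+θ))
    have e3 : (∫ t in a..(a + θ), Φ t)
        = ((∫ t in b..(b + θ), Φ t) + ∫ t in (b + θ)..(a + θ), Φ t) - ∫ t in b..a, Φ t := by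
      rw [e2, ← e1]; abel
    rw [e3]
    abel
  rw [h1, h1, ← smul_sub, h2, norm_smul, norm_inv, Real.norm_of_nonneg hθ.le]
  have := intervalIntegral.norm_integral_le_of_norm_le_const (f := fun t => Φ (t + θ) - Φ t)
    (a := b) (b := a) (C := s)
    (fun t ht => h t (by rw [Set.uIcc_comm]; exact Set.uIoc_subset_uIcc ht))
  calc θ⁻¹ * _ ≤ θ⁻¹ * (s * |a - b|) := by gcongr
    _ = _ := by field_simp

lemma smooth_step {d m : ℕ} (f : E d → E m) (hf : ContDiff ℝ 1 f) (θ r s : ℝ)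
    (hθ : 0 < θ) (hθr : θ ≤ r) (hs : 0 ≤ s)
    (hosc : ∀ x ∈ domJ d θ ∅, ∀ y ∈ domJ d θ ∅, ‖x - y‖ ≤ r →
      ‖fderiv ℝ f x - fderiv ℝ f y‖ ≤ s) (J : Finset (Fin d)) :
    ∃ h : E d → E m, ContDiff ℝ 1 h ∧
      (∀ x ∈ domJ d θ J, ∀ y ∈ domJ d θ J, ‖x - y‖ ≤ r →
        ‖fderiv ℝ h x - fderiv ℝ h y‖ ≤ s) ∧
      (∀ x ∈ domJ d θ J, ‖fderiv ℝ h x - fderiv ℝ f x‖ ≤ J.card * s) ∧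
      (∀ x ∈ domJ d θ J, ∀ y ∈ domJ d θ J, (∀ j ∉ J, x j = y j) →
        ‖fderiv ℝ h x - fderiv ℝ h y‖ ≤ s / θ * ∑ j ∈ J, |x j - y j|) := by
  induction J using Finset.induction_on with
  | empty =>
    refine ⟨f, hf, hosc, by simp, ?_⟩
    intro x _ y _ hxy
    have : x = y := by ext j; exact hxy j (by simp)
    simp [this]
  | insert i J hi ih =>
    obtain ⟨h, hh, h1, h2, h3⟩ := ih
    set v : E d := EuclideanSpace.single i θ with hv
    obtain ⟨c1, c2⟩ := stek_fderiv h hh v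
    have hdc : Continuous (fderiv ℝ h) := hh.continuous_fderiv (by norm_num)
    have hmem : ∀ x ∈ domJ d θ (insert i J), ∀ t ∈ Set.Icc (0:ℝ) 1,
        x + t • v ∈ domJ d θ J := by
      intro x hx t ht j
      have hxj := hx j
      by_cases hj : j = i
      · subst hj
        simp only [Finset.mem_insert, true_or, if_true] at hxj
        simp only [PiLp.add_apply, PiLp.smul_apply, hv, PiLp.single_apply, if_true, smul_eq_mul, hi,
          if_false]
        constructor
        · have := mul_nonneg ht.1 hθ.le; linarith [hxj.1]
        · nlinarith [ht.2, hxj.2]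
      · simpa [hv, hj] using hxj
    have hIntb : ∀ x, IntervalIntegrable (fun t : ℝ => fderiv ℝ h (x + t • v)) volume 0 1 :=
      fun x => Continuous.intervalIntegrable (by fun_prop) _ _
    have hsub : ∀ x y, ∀ C : ℝ, (∀ t ∈ Set.Icc (0:ℝ) 1,
        ‖fderiv ℝ h (x + t • v) - fderiv ℝ h (y + t • v)‖ ≤ C) →
        ‖(∫ t in (0:ℝ)..1, fderiv ℝ h (x + t • v))
          - ∫ t in (0:ℝ)..1, fderiv ℝ h (y + t • v)‖ ≤ C := by
      intro x y C hC
      rw [← intervalIntegral.integral_sub (hIntb x) (hIntb y)]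
      exact avg_bound _ _ hC
    have hdomsub : domJ d θ (insert i J) ⊆ domJ d θ J := by
      intro x hx
      simpa using hmem x hx 0 (by simp)
    refine ⟨_, c1, ?_, ?_, ?_⟩
    · intro x hx y hy hxy
      rw [c2, c2]
      exact hsub x y s fun t ht => h1 _ (hmem x hx t ht) _ (hmem y hy t ht) (by simpa using hxy)
    · intro x hx
      rw [c2, Finset.card_insert_of_notMem hi]
      have e1 : ‖(∫ t in (0:ℝ)..1, fderiv ℝ h (x + t • v)) - fderiv ℝ h x‖ ≤ s := by
        have : (∫ t in (0:ℝ)..1, fderiv ℝ h (x + t • v)) - fderiv ℝ h x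
            = ∫ t in (0:ℝ)..1, (fderiv ℝ h (x + t • v) - fderiv ℝ h x) := by
          rw [intervalIntegral.integral_sub (hIntb x) intervalIntegrable_const]
          simp
        rw [this]
        refine avg_bound _ _ fun t ht => h1 _ (hmem x hx t ht) _ (hdomsub hx) ?_
        have : ‖t • v‖ ≤ θ := by
          rw [norm_smul, hv, PiLp.norm_single, Real.norm_of_nonneg ht.1,
            Real.norm_of_nonneg hθ.le]
          nlinarith [ht.2]
        simpa using this.trans hθr
      have e2 := h2 x (hdomsub hx)
      calc _ = ‖((∫ t in (0:ℝ)..1, fderiv ℝ h (x + t • v)) - fderiv ℝ h x)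
            + (fderiv ℝ h x - fderiv ℝ f x)‖ := by congr 1; abel
        _ ≤ s + J.card * s := (norm_add_le _ _).trans (add_le_add e1 e2)
        _ = _ := by push_cast; ring
    · intro x hx y hy hxy
      rw [c2, c2, Finset.sum_insert hi]
      set z : E d := x + EuclideanSpace.single i (y i - x i) with hz
      have hzi : z i = y i := by simp [hz]
      have hzj : ∀ j, j ≠ i → z j = x j := by intro j hj; simp [hz, hj]
      have hzm : z ∈ domJ d θ (insert i J) := by
        intro j
        by_cases hj : j = i
        · subst hj; rw [hzi]; exact hy j
        · rw [hzj j hj]; exact hx j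
      have b1 : ‖(∫ t in (0:ℝ)..1, fderiv ℝ h (z + t • v))
          - ∫ t in (0:ℝ)..1, fderiv ℝ h (y + t • v)‖ ≤ s / θ * ∑ j ∈ J, |x j - y j| := by
        refine hsub z y _ fun t ht => ?_
        refine (h3 _ (hmem z hzm t ht) _ (hmem y hy t ht) ?_).trans (le_of_eq ?_)
        · intro j hj
          by_cases hji : j = i
          · subst hji; simp [hzi]
          · simp [hzj j hji, hxy j (by simp [hj, hji])]
        · congr 1
          refine Finset.sum_congr rfl fun j hj => ?_
          have : j ≠ i := fun e => hi (e ▸ hj)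
          simp [hzj j this]
      have b2 : ‖(∫ t in (0:ℝ)..1, fderiv ℝ h (x + t • v))
          - ∫ t in (0:ℝ)..1, fderiv ℝ h (z + t • v)‖ ≤ s / θ * |x i - y i| := by
        let Φ : ℝ → (E d →L[ℝ] E m) := fun t => fderiv ℝ h (x + EuclideanSpace.single i (t - x i))
        have hsing : Continuous (fun t : ℝ => (EuclideanSpace.single i (t - x i) : E d)) := by
          have : (fun t : ℝ => (EuclideanSpace.single i (t - x i) : E d))
              = fun t => (t - x i) • (EuclideanSpace.single i 1 : E d) := by
            ext t j; by_cases hj : j = i <;> simp [hj]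
          rw [this]; fun_prop
        have hΦ : Continuous Φ := hdc.comp (continuous_const.add hsing)
        have hb := shift_bound Φ hΦ θ s (x i) (y i) hθ ?_
        · have q1 : ∀ t : ℝ, fderiv ℝ h (x + t • v) = Φ (x i + t * θ) := by
            intro t
            simp only [Φ]; congr 1; ext j; by_cases hj : j = i
            · subst hj; simp [hv]
            · simp [hv, hj]
          have q2 : ∀ t : ℝ, fderiv ℝ h (z + t • v) = Φ (y i + t * θ) := by
            intro t
            simp only [Φ]; congr 1; ext j; by_cases hj : j = i
            · subst hj; simp [hv, hz]
            · simp [hv, hj, hz]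
          simp only [q1, q2]
          exact hb
        · intro t ht
          have hxi := hx i
          have hyi := hy i
          simp only [Finset.mem_insert, true_or, if_true] at hxi hyi
          have ht01 : 0 ≤ t ∧ t ≤ 1 := by
            rw [Set.mem_uIcc] at ht
            rcases ht with ht | ht <;> constructor <;> linarith
          refine h1 _ ?_ _ ?_ ?_
          · intro j
            by_cases hj : j = i
            · subst hj; simp [hi]; constructor <;> linarith
            · simpa [hj] using hx j
          · intro j
            by_cases hj : j = i
            · subst hj; simp [hi]; constructor <;> linarith
            · simpa [hj] using hx j
          · have : (x + EuclideanSpace.single i (t + θ - x i))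
                - (x + EuclideanSpace.single i (t - x i)) = v := by
              ext j; by_cases hj : j = i
              · subst hj; simp [hv]
              · simp [hj, hv]
            rw [this, hv, PiLp.norm_single, Real.norm_of_nonneg hθ.le]
            exact hθr
      calc _ = ‖((∫ t in (0:ℝ)..1, fderiv ℝ h (x + t • v))
          - ∫ t in (0:ℝ)..1, fderiv ℝ h (z + t • v)) + ((∫ t in (0:ℝ)..1, fderiv ℝ h (z + t • v))
          - ∫ t in (0:ℝ)..1, fderiv ℝ h (y + t • v))‖ := by congr 1; abel
        _ ≤ _ := (norm_add_le _ _).trans (add_le_add b2 b1)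
        _ = _ := by ring

lemma norm_le_of_coord {d : ℕ} (x : E d) (c : ℝ) (hc : 0 ≤ c) (h : ∀ i, |x i| ≤ c) :
    ‖x‖ ≤ c * Real.sqrt d := by
  rw [EuclideanSpace.norm_eq]
  have : ∑ i, ‖x i‖ ^ 2 ≤ c ^ 2 * d := by
    calc ∑ i, ‖x i‖ ^ 2 ≤ ∑ _i : Fin d, c ^ 2 := by
          refine Finset.sum_le_sum fun i _ => ?_
          rw [Real.norm_eq_abs]
          exact pow_le_pow_left₀ (abs_nonneg _) (h i) 2
      _ = _ := by simp [mul_comm]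
  calc _ ≤ Real.sqrt (c ^ 2 * d) := Real.sqrt_le_sqrt this
    _ = _ := by rw [Real.sqrt_mul (sq_nonneg _), Real.sqrt_sq hc]

lemma smooth_approx {d m : ℕ} (hd : 1 ≤ d) (f : E d → E m) (hf : ContDiff ℝ 1 f) (r s : ℝ)
    (hr : 0 < r) (hs : 0 ≤ s)
    (hosc : ∀ x ∈ unitCube d, ∀ y ∈ unitCube d, ‖x - y‖ ≤ r →
      ‖fderiv ℝ f x - fderiv ℝ f y‖ ≤ s) :
    ∃ g : E d → E m, ContDiff ℝ 1 g ∧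
      (∀ x ∈ unitCube d, ‖fderiv ℝ g x - fderiv ℝ f x‖ ≤ (d + 1) * s) ∧
      (∀ x ∈ unitCube d, ∀ y ∈ unitCube d,
        ‖fderiv ℝ g x - fderiv ℝ g y‖ ≤ s * Real.sqrt d / r * ∑ j, |x j - y j|) := by
  have hd' : (1:ℝ) ≤ Real.sqrt d := by
    rw [Real.one_le_sqrt]; exact_mod_cast hd
  have hd0 : 0 < Real.sqrt d := by linarith
  set θ : ℝ := r / Real.sqrt d with hθdef
  have hθ : 0 < θ := by positivity
  have hθr : θ ≤ r := div_le_self hr.le hd'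
  set l : ℝ := (1 + θ)⁻¹ with hl
  have hl0 : 0 < l := by positivity
  have hl1 : l ≤ 1 := inv_le_one_of_one_le₀ (by linarith)
  have hlθ : l * (1 + θ) = 1 := inv_mul_cancel₀ (by positivity)
  let f1 : E d → E m := fun x => l⁻¹ • f (l • x)
  have hf1 : ContDiff ℝ 1 f1 := by
    have : ContDiff ℝ 1 (fun x : E d => l • x) := contDiff_const_smul l
    exact (hf.comp this).const_smul l⁻¹
  have hdf1 : ∀ x, fderiv ℝ f1 x = fderiv ℝ f (l • x) := by
    intro x
    have h1 : HasFDerivAt f (fderiv ℝ f (l • x)) (l • x) :=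
      ((hf.differentiable (by norm_num)) _).hasFDerivAt
    have h2 : HasFDerivAt (fun x : E d => l • x) (l • ContinuousLinearMap.id ℝ (E d)) x :=
      (hasFDerivAt_id x).const_smul l
    have h3 := (HasFDerivAt.comp x h1 h2).const_smul l⁻¹
    have h4 : HasFDerivAt f1 (fderiv ℝ f (l • x)) x := by
      have heq : l⁻¹ • (fderiv ℝ f (l • x) ∘SL (l • ContinuousLinearMap.id ℝ (E d)))
          = fderiv ℝ f (l • x) := by
        ext v
        simp [hl0.ne']
      rw [heq] at h3
      exact h3
    exact h4.fderiv
  have hmem : ∀ x ∈ domJ d θ ∅, l • x ∈ unitCube d := by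
    intro x hx i
    have := hx i
    simp only [Finset.notMem_empty, if_false] at this
    simp only [PiLp.smul_apply, smul_eq_mul, Set.mem_Icc]
    constructor
    · exact mul_nonneg hl0.le this.1
    · rw [← hlθ]; exact mul_le_mul_of_nonneg_left this.2 hl0.le
  have hu : ∀ x ∈ unitCube d, x ∈ domJ d θ Finset.univ := by
    intro x hx i
    simpa using hx i
  have hu0 : ∀ x ∈ unitCube d, x ∈ domJ d θ ∅ := by
    intro x hx i
    have := hx i
    simp only [Finset.notMem_empty, if_false]
    exact ⟨this.1, by linarith [this.2]⟩
  obtain ⟨g, hg, -, g2, g3⟩ := smooth_step f1 hf1 θ r s hθ hθr hs (by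
    intro x hx y hy hxy
    rw [hdf1, hdf1]
    refine hosc _ (hmem x hx) _ (hmem y hy) ?_
    rw [← smul_sub, norm_smul, Real.norm_of_nonneg hl0.le]
    nlinarith [norm_nonneg (x - y)]) Finset.univ
  refine ⟨g, hg, ?_, ?_⟩
  · intro x hx
    have e1 := g2 x (hu x hx)
    have e2 : ‖fderiv ℝ f1 x - fderiv ℝ f x‖ ≤ s := by
      rw [hdf1]
      refine hosc _ (hmem x (hu0 x hx)) _ hx ?_
      have h1 : ‖l • x - x‖ ≤ (1 - l) * Real.sqrt d := by
        refine norm_le_of_coord _ _ (by linarith) fun i => ?_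
        have := hx i
        simp only [PiLp.sub_apply, PiLp.smul_apply, smul_eq_mul]
        rw [abs_le]
        constructor <;> nlinarith [this.1, this.2]
      have h2 : 1 - l ≤ θ := by nlinarith
      calc _ ≤ _ := h1
        _ ≤ θ * Real.sqrt d := by gcongr
        _ = r := by rw [hθdef]; field_simp
    calc _ = ‖(fderiv ℝ g x - fderiv ℝ f1 x) + (fderiv ℝ f1 x - fderiv ℝ f x)‖ := by
          congr 1; abel
      _ ≤ (Finset.univ : Finset (Fin d)).card * s + s := (norm_add_le _ _).trans (add_le_add e1 e2)
      _ = _ := by simp; ring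
  · intro x hx y hy
    have := g3 x (hu x hx) y (hu y hy) (by simp)
    convert this using 2
    rw [hθdef]; field_simp

/-- event that a perturbation is (nearly) singular -/
def badSet {m d : ℕ} (R : Matrix (Fin m) (Fin d) ℝ) (b : ℝ) (i : Fin m) (j : Fin d) :
    Set (Fin m × Fin d → ℝ) :=
  {A | ∃ p ∈ (Set.Icc (-1) 1 : Set ((Fin m → ℝ) × (Fin d → ℝ))), p.1 i = 1 ∧ p.2 j = 1 ∧
    (∀ l, |∑ k, p.1 k * (R k l + A (k, l))| ≤ b) ∧
    ∀ k, k ≠ i → ∑ l, p.2 l * (R k l + A (k, l)) = 0}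

lemma badSet_closed {m d : ℕ} (R : Matrix (Fin m) (Fin d) ℝ) (b : ℝ) (i : Fin m) (j : Fin d) :
    IsClosed (badSet R b i j) := by
  let K : Set ((Fin m → ℝ) × (Fin d → ℝ)) := Set.Icc (-1) 1
  have hK : CompactSpace K := isCompact_iff_compactSpace.1 isCompact_Icc
  let C : Set (K × (Fin m × Fin d → ℝ)) := {q | q.1.1.1 i = 1 ∧ q.1.1.2 j = 1 ∧
    (∀ l, |∑ k, q.1.1.1 k * (R k l + q.2 (k, l))| ≤ b) ∧
    ∀ k, k ≠ i → ∑ l, q.1.1.2 l * (R k l + q.2 (k, l)) = 0}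
  have hC : IsClosed C := by
    have h1 : IsClosed {q : K × (Fin m × Fin d → ℝ) | q.1.1.1 i = 1} :=
      isClosed_eq (by fun_prop) (by fun_prop)
    have h2 : IsClosed {q : K × (Fin m × Fin d → ℝ) | q.1.1.2 j = 1} :=
      isClosed_eq (by fun_prop) (by fun_prop)
    have h3 : IsClosed {q : K × (Fin m × Fin d → ℝ) |
        ∀ l, |∑ k, q.1.1.1 k * (R k l + q.2 (k, l))| ≤ b} := by
      simp only [Set.ofPred_forall]
      exact isClosed_iInter fun l => isClosed_le (by fun_prop) (by fun_prop)
    have h4 : IsClosed {q : K × (Fin m × Fin d → ℝ) |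
        ∀ k, k ≠ i → ∑ l, q.1.1.2 l * (R k l + q.2 (k, l)) = 0} := by
      simp only [Set.ofPred_forall]
      exact isClosed_iInter fun k => isClosed_iInter fun _ => isClosed_eq (by fun_prop) (by fun_prop)
    exact h1.inter (h2.inter (h3.inter h4))
  have := isClosedMap_snd_of_compactSpace C hC
  convert this using 1
  ext A
  simp only [badSet, Set.mem_ofPred_eq, Set.mem_image, Prod.exists, exists_eq_right]
  constructor
  · rintro ⟨c, n, hp, h⟩
    exact ⟨⟨(c, n), hp⟩, h⟩
  · rintro ⟨⟨⟨c, n⟩, hp⟩, h⟩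
    exact ⟨c, n, hp, h⟩

lemma badSet_slice {m d : ℕ} (R : Matrix (Fin m) (Fin d) ℝ) (b : ℝ) (i : Fin m) (j : Fin d)
    (A : Fin m × Fin d → ℝ) :
    ∃ c, {t : ℝ | Function.update A (i, j) t ∈ badSet R b i j} ⊆ Set.Icc (c - d * b) (c + d * b) := by
  by_cases hne : ∃ t : ℝ, Function.update A (i, j) t ∈ badSet R b i j
  swap
  · refine ⟨0, fun t ht => (hne ⟨t, ht⟩).elim⟩
  obtain ⟨t0, p0, hp0, -, hn1, -, hn2⟩ := hne
  set n := p0.2 with hn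
  have hnb : ∀ l, |n l| ≤ 1 := fun l => abs_le.2 ⟨hp0.1.2 l, hp0.2.2 l⟩
  refine ⟨-(R i j + ∑ l ∈ Finset.univ.erase j, n l * (R i l + A (i, l))), ?_⟩
  rintro t ⟨p, hp, hc, -, hb, -⟩
  have hz : ∀ k, k ≠ i → ∑ l, n l * (R k l + Function.update A (i, j) t (k, l)) = 0 := by
    intro k hk
    rw [← hn2 k hk]
    refine Finset.sum_congr rfl fun l _ => ?_
    have : (k, l) ≠ (i, j) := fun h => hk (Prod.ext_iff.1 h).1
    rw [Function.update_of_ne this, Function.update_of_ne this]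
  have e1 : ∑ l, n l * ∑ k, p.1 k * (R k l + Function.update A (i, j) t (k, l))
      = ∑ l, n l * (R i l + Function.update A (i, j) t (i, l)) := by
    calc _ = ∑ k, p.1 k * ∑ l, n l * (R k l + Function.update A (i, j) t (k, l)) := by
          simp only [Finset.mul_sum]
          rw [Finset.sum_comm]
          refine Finset.sum_congr rfl fun k _ => Finset.sum_congr rfl fun l _ => by ring
      _ = p.1 i * ∑ l, n l * (R i l + Function.update A (i, j) t (i, l)) := by
          refine Finset.sum_eq_single i (fun k _ hk => by rw [hz k hk, mul_zero]) (by simp)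
      _ = _ := by rw [hc, one_mul]
  have e2 : ∑ l, n l * (R i l + Function.update A (i, j) t (i, l))
      = R i j + t + ∑ l ∈ Finset.univ.erase j, n l * (R i l + A (i, l)) := by
    rw [← Finset.add_sum_erase _ _ (Finset.mem_univ j), hn1]
    simp only [Function.update_self, one_mul]
    congr 1
    refine Finset.sum_congr rfl fun l hl => ?_
    have : (i, l) ≠ (i, j) := fun h => (Finset.ne_of_mem_erase hl) (Prod.ext_iff.1 h).2
    rw [Function.update_of_ne this]
  have e3 : |∑ l, n l * ∑ k, p.1 k * (R k l + Function.update A (i, j) t (k, l))| ≤ d * b := by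
    calc _ ≤ ∑ l, |n l * ∑ k, p.1 k * (R k l + Function.update A (i, j) t (k, l))| :=
          Finset.abs_sum_le_sum_abs _ _
      _ ≤ ∑ _l : Fin d, b := by
          refine Finset.sum_le_sum fun l _ => ?_
          rw [abs_mul]
          calc _ ≤ 1 * b := mul_le_mul (hnb l) (hb l) (abs_nonneg _) zero_le_one
            _ = b := one_mul b
      _ = _ := by simp
  rw [e1, e2, abs_le] at e3
  constructor <;> linarith [e3.1, e3.2]

lemma mem_bad {m d : ℕ} (hm : 1 ≤ m) (hmd : m ≤ d) (R R' : Matrix (Fin m) (Fin d) ℝ) (η : ℝ)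
    (hη : ∀ k l, |R k l - R' k l| ≤ η) (A : Fin m × Fin d → ℝ)
    (hrk : (R' + Matrix.of fun k l => A (k, l)).rank ≤ m - 1) :
    ∃ i j, A ∈ badSet R (m * η) i j := by
  set Q := R' + Matrix.of fun k l => A (k, l) with hQ
  have hnl : ¬ LinearIndependent ℝ Q.row := by
    intro h
    have := h.rank_matrix
    simp at this
    omega
  rw [Fintype.not_linearIndependent_iff] at hnl
  obtain ⟨c, hc, i0, hi0⟩ := hnl
  have : Nonempty (Fin m) := ⟨i0⟩
  obtain ⟨i, hi⟩ := Finite.exists_max (fun k => |c k|)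
  have hci : 0 < |c i| := lt_of_lt_of_le (abs_pos.2 hi0) (hi i0)
  have hci' : c i ≠ 0 := abs_pos.1 hci

  let T : (Fin d → ℝ) →ₗ[ℝ] ({k : Fin m // k ≠ i} → ℝ) :=
    Matrix.mulVecLin (Matrix.of fun (k : {k : Fin m // k ≠ i}) l => R k l + A (k, l))
  have hT : LinearMap.ker T ≠ ⊥ := by
    apply LinearMap.ker_ne_bot_of_finrank_lt
    simp
    omega
  obtain ⟨n, hn, hn0⟩ := Submodule.exists_mem_ne_zero_of_ne_bot hT
  obtain ⟨l0, hl0⟩ := Function.ne_iff.1 hn0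
  have : Nonempty (Fin d) := ⟨l0⟩
  obtain ⟨j, hj⟩ := Finite.exists_max (fun l => |n l|)
  have hnj : 0 < |n j| := lt_of_lt_of_le (abs_pos.2 hl0) (hj l0)
  have hnj' : n j ≠ 0 := abs_pos.1 hnj
  have hcb : ∀ k, |c k / c i| ≤ 1 := fun k => by
    rw [abs_div]; exact div_le_one_of_le₀ (hi k) hci.le
  have hnb : ∀ l, |n l / n j| ≤ 1 := fun l => by
    rw [abs_div]; exact div_le_one_of_le₀ (hj l) hnj.le
  refine ⟨i, j, (fun k => c k / c i, fun l => n l / n j), ?_, div_self hci', div_self hnj', ?_, ?_⟩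
  · exact ⟨⟨fun k => (abs_le.1 (hcb k)).1, fun l => (abs_le.1 (hnb l)).1⟩,
      ⟨fun k => (abs_le.1 (hcb k)).2, fun l => (abs_le.1 (hnb l)).2⟩⟩
  · intro l
    have h1 : ∑ k, c k * (R' k l + A (k, l)) = 0 := by
      have := congrFun hc l
      simpa [hQ, Matrix.row] using this
    have h2 : ∑ k, c k / c i * (R k l + A (k, l)) = ∑ k, c k / c i * (R k l - R' k l) := by
      have : ∑ k, c k / c i * (R' k l + A (k, l)) = 0 := by
        have h3 : ∑ k, c k / c i * (R' k l + A (k, l))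
            = (∑ k, c k * (R' k l + A (k, l))) / c i := by
          rw [Finset.sum_div]; exact Finset.sum_congr rfl fun k _ => by ring
        rw [h3, h1, zero_div]
      rw [← sub_eq_zero, ← Finset.sum_sub_distrib, ← this]
      exact Finset.sum_congr rfl fun k _ => by ring
    rw [h2]
    calc _ ≤ ∑ k, |c k / c i * (R k l - R' k l)| := Finset.abs_sum_le_sum_abs _ _
      _ ≤ ∑ _k : Fin m, η := by
          refine Finset.sum_le_sum fun k _ => ?_
          rw [abs_mul]
          calc _ ≤ 1 * η := mul_le_mul (hcb k) (hη k l) (abs_nonneg _) zero_le_one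
            _ = η := one_mul η
      _ = _ := by simp
  · intro k hk
    have h1 : ∑ l, (R k l + A (k, l)) * n l = 0 := by
      have := congrFun (LinearMap.mem_ker.1 hn) ⟨k, hk⟩
      simpa [T, Matrix.mulVec, dotProduct] using this
    have h3 : ∑ l, n l / n j * (R k l + A (k, l)) = (∑ l, (R k l + A (k, l)) * n l) / n j := by
      rw [Finset.sum_div]; exact Finset.sum_congr rfl fun k _ => by ring
    change ∑ l, n l / n j * (R k l + A (k, l)) = 0
    rw [h3, h1, zero_div]

/-- uniform distribution on `[0,a]` -/
def unif (a : ℝ) : Measure ℝ := (ENNReal.ofReal a)⁻¹ • volume.restrict (Set.Icc 0 a)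

lemma unif_prob (a : ℝ) (ha : 0 < a) : IsProbabilityMeasure (unif a) := by
  constructor
  simp only [unif, Measure.smul_apply, Measure.restrict_apply MeasurableSet.univ, Set.univ_inter,
    Real.volume_Icc, sub_zero, smul_eq_mul]
  exact ENNReal.inv_mul_cancel (by simpa using ha) ENNReal.ofReal_ne_top

lemma badSet_prob {m d : ℕ} (R : Matrix (Fin m) (Fin d) ℝ) (b a : ℝ) (ha : 0 < a)
    (i : Fin m) (j : Fin d) :
    Measure.pi (fun _ : Fin m × Fin d => unif a) (badSet R b i j)
      ≤ ENNReal.ofReal (2 * d * b / a) := by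
  have := unif_prob a ha
  have hms : MeasurableSet (badSet R b i j) := (badSet_closed R b i j).measurableSet
  rw [← lintegral_indicator_one hms]
  calc _ ≤ ∫⁻ _x, ENNReal.ofReal (2 * d * b / a)
        ∂Measure.pi (fun _ : Fin m × Fin d => unif a) := by
        refine lintegral_le_of_lmarginal_le {(i, j)}
          (measurable_one.indicator hms) measurable_const ?_
        rw [lmarginal_singleton, lmarginal_singleton]
        intro A
        simp only [lintegral_const, measure_univ, mul_one]
        obtain ⟨c, hc⟩ := badSet_slice R b i j A
        calc _ ≤ ∫⁻ t, (Set.Icc (c - d * b) (c + d * b)).indicator 1 t ∂unif a := by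
              refine lintegral_mono fun t => ?_
              by_cases ht : Function.update A (i, j) t ∈ badSet R b i j
              · rw [Set.indicator_of_mem (hc ht)]
                simp [ht]
              · simp [ht]
          _ = unif a (Set.Icc (c - d * b) (c + d * b)) := lintegral_indicator_one measurableSet_Icc
          _ ≤ (ENNReal.ofReal a)⁻¹ * volume (Set.Icc (c - d * b) (c + d * b)) := by
              simp only [unif, Measure.smul_apply, smul_eq_mul]
              gcongr
              exact Measure.restrict_le_self
          _ = _ := by
              rw [Real.volume_Icc, mul_comm, ← div_eq_mul_inv, ← ENNReal.ofReal_div_of_pos ha]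
              congr 1; ring
    _ = _ := by simp

lemma jac_diff {d m : ℕ} (g : E d → E m) (x y : E d) (k : Fin m) (l : Fin d) :
    |jac g x k l - jac g y k l| ≤ ‖fderiv ℝ g x - fderiv ℝ g y‖ := by
  have h1 : jac g x k l - jac g y k l
      = ((fderiv ℝ g x - fderiv ℝ g y) (EuclideanSpace.single l 1)) k := by
    simp [jac]
  rw [h1, ← Real.norm_eq_abs]
  refine (PiLp.norm_apply_le _ k).trans ?_
  refine ((fderiv ℝ g x - fderiv ℝ g y).le_opNorm _).trans ?_
  simp

def cell (d n : ℕ) (q : Fin d → Fin (n + 1)) : Set (E d) :=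
  {x | ∀ i, ((q i : ℕ) : ℝ) / (n + 1) ≤ x i ∧ x i ≤ ((q i : ℕ) : ℝ) / (n + 1) + 1 / (n + 1)}

def corner (d n : ℕ) (q : Fin d → Fin (n + 1)) : E d :=
  WithLp.toLp 2 fun i => ((q i : ℕ) : ℝ) / (n + 1)

lemma corner_mem (d n : ℕ) (q : Fin d → Fin (n + 1)) : corner d n q ∈ unitCube d := by
  intro i
  have h : ((q i : ℕ) : ℝ) ≤ n := by exact_mod_cast Nat.lt_succ_iff.1 (q i).2
  have hn : (0:ℝ) < n + 1 := by positivity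
  simp only [corner, Set.mem_Icc]
  exact ⟨by positivity, by rw [div_le_one hn]; linarith⟩

lemma openCube_cell (d n : ℕ) (x : E d) (hx : x ∈ openCube d) : ∃ q, x ∈ cell d n q := by
  have hn : (0:ℝ) < n + 1 := by positivity
  have hlt : ∀ i, ⌊(n + 1) * x i⌋₊ < n + 1 := by
    intro i
    rw [Nat.floor_lt (mul_nonneg hn.le (hx i).1.le)]
    push_cast
    nlinarith [(hx i).2]
  refine ⟨fun i => ⟨⌊(n + 1) * x i⌋₊, hlt i⟩, fun i => ?_⟩
  have h1 := Nat.floor_le (mul_nonneg hn.le (hx i).1.le)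
  have h2 := Nat.lt_floor_add_one ((n + 1) * x i)
  constructor
  · rw [div_le_iff₀ hn]; linarith
  · rw [← add_div, le_div_iff₀ hn]; simp only; linarith

lemma cell_diam (d n : ℕ) (q : Fin d → Fin (n + 1)) :
    Metric.ediam (cell d n q) ≤ ENNReal.ofReal (d / (n + 1)) := by
  refine Metric.ediam_le fun x hx y hy => ?_
  rw [edist_dist]
  apply ENNReal.ofReal_le_ofReal
  rw [dist_eq_norm]
  refine (norm_le_of_coord (x - y) (1 / (n + 1)) (by positivity) fun i => ?_).trans ?_
  · have h1 := hx i
    have h2 := hy i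
    rw [PiLp.sub_apply, abs_le]
    constructor <;> linarith
  · rw [div_mul_eq_mul_div, one_mul]
    gcongr
    rw [Real.sqrt_le_left (by positivity)]
    have : (d:ℝ) ≤ ((d ^ 2 : ℕ) : ℝ) := by
      exact_mod_cast Nat.le_self_pow two_ne_zero d
    simpa using this

open Filter in
lemma exists_good {d m : ℕ} (hm : 1 ≤ m) (hmd : m ≤ d) (g : E d → E m) (L a : ℝ)
    (hL0 : 0 ≤ L) (ha : 0 < a)
    (hL : ∀ x ∈ unitCube d, ∀ y ∈ unitCube d,
        ‖fderiv ℝ g x - fderiv ℝ g y‖ ≤ L * ∑ j, |x j - y j|) :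
    ∃ A : Fin m × Fin d → ℝ, (∀ p, 0 ≤ A p ∧ A p ≤ a) ∧
      μH[(d:ℝ) - 1] {x ∈ openCube d | (jac g x + Matrix.of fun k l => A (k, l)).rank ≤ m - 1}
        ≤ ENNReal.ofReal (2 * d ^ (d + 4) * L / a) := by
  classical
  have := unif_prob a ha
  have hd : 1 ≤ d := hm.trans hmd
  set ν := Measure.pi (fun _ : Fin m × Fin d => unif a) with hν
  let b : ℕ → ℝ := fun n => m * (L * d / (n + 1))
  let S : (n : ℕ) → (Fin d → Fin (n + 1)) → (Fin m × Fin d) → Set (Fin m × Fin d → ℝ) :=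
    fun n q p => badSet (jac g (corner d n q)) (b n) p.1 p.2
  let w : ℕ → ℝ≥0∞ := fun n => ENNReal.ofReal (((d:ℝ) / (n + 1)) ^ (d - 1))
  let F : ℕ → (Fin m × Fin d → ℝ) → ℝ≥0∞ := fun n A =>
    ∑ q, ∑ p, (S n q p).indicator (fun _ => w n) A
  have hSm : ∀ n q p, MeasurableSet (S n q p) := fun n q p => (badSet_closed _ _ _ _).measurableSet
  have hFm : ∀ n, Measurable (F n) := by
    intro n
    refine Finset.measurable_fun_sum _ fun q _ => Finset.measurable_fun_sum _ fun p _ => ?_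
    exact measurable_const.indicator (hSm n q p)
  have hFi : ∀ n, ∫⁻ A, F n A ∂ν ≤ ENNReal.ofReal (2 * d ^ (d + 4) * L / a) := by
    intro n
    have hn : (0:ℝ) < n + 1 := by positivity
    have e1 : ∫⁻ A, F n A ∂ν = ∑ q, ∑ p, w n * ν (S n q p) := by
      rw [lintegral_finsetSum _ fun q _ => Finset.measurable_fun_sum _ fun p _ =>
        measurable_const.indicator (hSm n q p)]
      refine Finset.sum_congr rfl fun q _ => ?_
      rw [lintegral_finsetSum _ fun p _ => measurable_const.indicator (hSm n q p)]
      refine Finset.sum_congr rfl fun p _ => ?_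
      rw [lintegral_indicator_const (hSm n q p)]
    rw [e1]
    have hb0 : 0 ≤ b n := by positivity
    calc _ ≤ ∑ _q : Fin d → Fin (n + 1), ∑ _p : Fin m × Fin d,
            ENNReal.ofReal (((d:ℝ) / (n + 1)) ^ (d - 1) * (2 * d * b n / a)) := by
          refine Finset.sum_le_sum fun q _ => Finset.sum_le_sum fun p _ => ?_
          rw [ENNReal.ofReal_mul (by positivity)]
          exact mul_le_mul_right (badSet_prob _ _ _ ha _ _) _
      _ = ENNReal.ofReal ((((n:ℝ) + 1) ^ d) * ((m * d) *
            (((d:ℝ) / (n + 1)) ^ (d - 1) * (2 * d * b n / a)))) := by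
          simp only [Finset.sum_const, Finset.card_univ, Fintype.card_prod, Fintype.card_fin,
            Fintype.card_fun, nsmul_eq_mul]
          generalize ((d:ℝ) / (n + 1)) ^ (d - 1) * (2 * d * b n / a) = z
          rw [ENNReal.ofReal_mul (by positivity), ENNReal.ofReal_mul (by positivity)]
          congr 1
          · rw [← ENNReal.ofReal_natCast]; push_cast; rfl
          · congr 1
            rw [← ENNReal.ofReal_natCast]; push_cast; rfl
      _ ≤ _ := by
          apply ENNReal.ofReal_le_ofReal
          obtain ⟨e, rfl⟩ : ∃ e, d = e + 1 := ⟨d - 1, by omega⟩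
          have hmd' : (m:ℝ) ≤ ((e + 1 : ℕ) : ℝ) := by exact_mod_cast hmd
          simp only [Nat.add_sub_cancel, b]
          generalize hD : ((e + 1 : ℕ) : ℝ) = D at *
          have hD0 : 0 ≤ D := by rw [← hD]; positivity
          have : ((n:ℝ) + 1) ^ (e + 1) * (m * D * ((D / (n + 1)) ^ e *
              (2 * D * (m * (L * D / (n + 1))) / a)))
              = (m * m) * (2 * D ^ (e + 3) * L / a) := by
            rw [div_pow]; field_simp; ring
          rw [this]
          calc _ ≤ (D * D) * (2 * D ^ (e + 3) * L / a) := by gcongr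
            _ = _ := by ring
  have hnull : ν {A | ¬ ∀ p, 0 ≤ A p ∧ A p ≤ a} = 0 := by
    have : ∀ᵐ A ∂ν, ∀ p, 0 ≤ A p ∧ A p ≤ a := by
      rw [ae_all_iff]
      intro p
      have h1 : ∀ᵐ t ∂(unif a), 0 ≤ t ∧ t ≤ a := by
        have : ∀ᵐ t ∂(volume.restrict (Set.Icc 0 a)), 0 ≤ t ∧ t ≤ a :=
          ae_restrict_mem measurableSet_Icc
        exact Measure.ae_smul_measure this _
      exact (Measure.tendsto_eval_ae_ae (μ := fun _ : Fin m × Fin d => unif a) (i := p)).eventually h1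
    exact this
  obtain ⟨A, hA, hle⟩ := exists_notMem_null_le_lintegral (μ := ν)
    (f := fun A => liminf (fun n => F n A) atTop) (Measurable.liminf hFm).aemeasurable hnull
  have hA' : ∀ p, 0 ≤ A p ∧ A p ≤ a := by simpa using hA
  refine ⟨A, hA', ?_⟩
  have hlim : liminf (fun n => F n A) atTop ≤ ENNReal.ofReal (2 * d ^ (d + 4) * L / a) := by
    refine hle.trans ((lintegral_liminf_le hFm).trans ?_)
    refine (liminf_le_liminf (Eventually.of_forall hFi)).trans ?_
    simp
  refine le_trans ?_ hlim
  let β : ℕ → Type := fun n => {q : Fin d → Fin (n + 1) // ∃ p, A ∈ S n q p}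
  have hr0 : Tendsto (fun n : ℕ => ENNReal.ofReal ((d:ℝ) / (n + 1))) atTop (𝓝 0) := by
    rw [← ENNReal.ofReal_zero]
    apply ENNReal.tendsto_ofReal
    have := (tendsto_one_div_add_atTop_nhds_zero_nat (𝕜 := ℝ)).const_mul (d:ℝ)
    simpa [div_eq_mul_inv] using this
  refine (Measure.hausdorffMeasure_le_liminf_sum (ι := β) ((d:ℝ) - 1) _
    (fun n : ℕ => ENNReal.ofReal ((d:ℝ) / (n + 1))) hr0 (fun n q => cell d n q.1)
    (Eventually.of_forall fun n q => cell_diam d n q.1) (Eventually.of_forall fun n => ?_)).trans ?_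
  · rintro x ⟨hx, hrk⟩
    obtain ⟨q, hq⟩ := openCube_cell d n x hx
    have hxu : x ∈ unitCube d := fun i => ⟨(hx i).1.le, (hx i).2.le⟩
    have hη : ∀ k l, |jac g (corner d n q) k l - jac g x k l| ≤ L * d / (n + 1) := by
      intro k l
      refine (jac_diff g _ _ k l).trans ((hL _ (corner_mem d n q) _ hxu).trans ?_)
      rw [mul_div_assoc]
      gcongr
      calc _ ≤ ∑ _j : Fin d, 1 / ((n:ℝ) + 1) := by
            refine Finset.sum_le_sum fun j _ => ?_
            have := hq j
            simp only [corner]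
            rw [abs_le]
            constructor <;> linarith
        _ = _ := by simp [div_eq_mul_inv]
    obtain ⟨i, j, hij⟩ := mem_bad hm hmd _ _ _ hη A hrk
    exact Set.mem_iUnion.2 ⟨⟨q, (i, j), hij⟩, hq⟩
  · refine liminf_le_liminf (Eventually.of_forall fun n => ?_)
    have hw : ∀ q : Fin d → Fin (n + 1), Metric.ediam (cell d n q) ^ ((d:ℝ) - 1) ≤ w n := by
      intro q
      have hd1 : (0:ℝ) ≤ (d:ℝ) - 1 := by
        have : (1:ℝ) ≤ d := by exact_mod_cast hd
        linarith
      refine (ENNReal.rpow_le_rpow (cell_diam d n q) hd1).trans (le_of_eq ?_)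
      rw [ENNReal.ofReal_rpow_of_nonneg (by positivity) hd1]
      have : (d:ℝ) - 1 = ((d - 1 : ℕ) : ℝ) := by rw [Nat.cast_sub hd]; simp
      rw [this, Real.rpow_natCast]
    calc _ ≤ ∑ _q : β n, w n := Finset.sum_le_sum fun q _ => hw q.1
      _ ≤ ∑ q : β n, ∑ p, (S n q.1 p).indicator (fun _ => w n) A := by
          refine Finset.sum_le_sum fun q _ => ?_
          obtain ⟨p, hp⟩ := q.2
          calc w n = (S n q.1 p).indicator (fun _ => w n) A := by rw [Set.indicator_of_mem hp]
            _ ≤ _ := Finset.single_le_sum (f := fun p => (S n q.1 p).indicator (fun _ => w n) A)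
                (fun _ _ => zero_le) (Finset.mem_univ p)
      _ = ∑ q ∈ Finset.univ.filter (fun q => ∃ p, A ∈ S n q p),
            ∑ p, (S n q p).indicator (fun _ => w n) A := by
          rw [Finset.sum_subtype (p := fun q => ∃ p, A ∈ S n q p)]
          simp
      _ ≤ F n A := Finset.sum_le_sum_of_subset (Finset.filter_subset _ _)

def matCLM {d m : ℕ} (A : Fin m × Fin d → ℝ) : E d →L[ℝ] E m :=
  (Matrix.toEuclideanLin (Matrix.of fun k l => A (k, l))).toContinuousLinearMap

lemma matCLM_apply {d m : ℕ} (A : Fin m × Fin d → ℝ) (x : E d) (k : Fin m) :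
    matCLM A x k = ∑ l, A (k, l) * x l := by
  simp [matCLM, Matrix.ofLp_toEuclideanLin_apply, Matrix.mulVec, dotProduct]

lemma matCLM_norm {d m : ℕ} (hmd : m ≤ d) (A : Fin m × Fin d → ℝ) (a : ℝ) (ha : 0 ≤ a)
    (hA : ∀ p, 0 ≤ A p ∧ A p ≤ a) : ‖matCLM A‖ ≤ d ^ 2 * a := by
  refine ContinuousLinearMap.opNorm_le_bound _ (by positivity) fun x => ?_
  have h1 : ‖matCLM A x‖ ≤ (d * a * ‖x‖) * Real.sqrt m := by
    refine norm_le_of_coord _ _ (by positivity) fun k => ?_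
    rw [matCLM_apply]
    calc _ ≤ ∑ l, |A (k, l) * x l| := Finset.abs_sum_le_sum_abs _ _
      _ ≤ ∑ _l : Fin d, a * ‖x‖ := by
          refine Finset.sum_le_sum fun l _ => ?_
          rw [abs_mul, abs_of_nonneg (hA _).1]
          refine mul_le_mul (hA _).2 ?_ (abs_nonneg _) ha
          rw [← Real.norm_eq_abs]; exact PiLp.norm_apply_le _ l
      _ = _ := by simp [mul_assoc]
  have h2 : Real.sqrt m ≤ d := by
    rw [Real.sqrt_le_left (by positivity)]
    have : (m:ℝ) ≤ ((d ^ 2 : ℕ) : ℝ) := by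
      exact_mod_cast hmd.trans (Nat.le_self_pow two_ne_zero d)
    simpa using this
  calc _ ≤ _ := h1
    _ ≤ (d * a * ‖x‖) * d := by gcongr
    _ = _ := by ring

lemma main_bound {d m : ℕ} (hm : 1 ≤ m) (hmd : m ≤ d) (f : E d → E m) (hf : ContDiff ℝ 1 f)
    (r s ε : ℝ) (hr : 0 < r) (hs : 0 < s)
    (hosc : ∀ x ∈ unitCube d, ∀ y ∈ unitCube d, ‖x - y‖ ≤ r →
      ‖fderiv ℝ f x - fderiv ℝ f y‖ ≤ s)
    (hε : Real.sqrt d * ((d + 1) * s + d ^ d * (d + 1) ^ 4 * s) ≤ ε) :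
    Nf f ε ≤ ENNReal.ofReal (2 * d ^ 2 * Real.sqrt d / r) := by
  have hd : 1 ≤ d := hm.trans hmd
  have hdR : (1:ℝ) ≤ d := by exact_mod_cast hd
  have hd0 : (0:ℝ) < d := by linarith
  obtain ⟨g, hg, g1, g2⟩ := smooth_approx hd f hf r s hr hs.le hosc
  set a : ℝ := d ^ d * (d + 1) ^ 4 * s / d ^ 2 with ha_def
  have ha : 0 < a := by positivity
  obtain ⟨A, hA, hH⟩ := exists_good hm hmd g (s * Real.sqrt d / r) a (by positivity) ha g2
  let G : E d → E m := fun x => g x + matCLM A x + (f 0 - g 0)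
  have hG : ContDiff ℝ 1 G := (hg.add (matCLM A).contDiff).add contDiff_const
  have hdG : ∀ x, fderiv ℝ G x = fderiv ℝ g x + matCLM A := by
    intro x
    have h1 : HasFDerivAt g (fderiv ℝ g x) x := (hg.differentiable (by norm_num) x).hasFDerivAt
    exact ((h1.add (matCLM A).hasFDerivAt).add_const (f 0 - g 0)).fderiv
  have hjac : ∀ x, jac G x = jac g x + Matrix.of fun k l => A (k, l) := by
    intro x
    ext k l
    simp [jac, hdG, matCLM_apply]
  set M : ℝ := (d + 1) * s + d ^ d * (d + 1) ^ 4 * s with hM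
  have hM0 : 0 ≤ M := by positivity
  have hdiff : ∀ x ∈ unitCube d, ‖fderiv ℝ G x - fderiv ℝ f x‖ ≤ M := by
    intro x hx
    have e1 := g1 x hx
    have e2 := matCLM_norm hmd A a ha.le hA
    have e3 : (d:ℝ) ^ 2 * a = d ^ d * (d + 1) ^ 4 * s := by rw [ha_def]; field_simp
    rw [e3] at e2
    rw [hdG]
    calc _ = ‖(fderiv ℝ g x - fderiv ℝ f x) + matCLM A‖ := by congr 1; abel
      _ ≤ _ := (norm_add_le _ _).trans (add_le_add e1 e2)
  have hsq : 1 ≤ Real.sqrt d := by rw [Real.one_le_sqrt]; exact hdR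
  have h0 : (0 : E d) ∈ unitCube d := fun i => by simp
  have hconv : Convex ℝ (unitCube d) := by
    intro x hx y hy p q hp hq hpq i
    have := (convex_Icc (0:ℝ) 1) (hx i) (hy i) hp hq hpq
    simpa using this
  have hadm : ∀ x ∈ unitCube d, ‖G x - f x‖ ≤ ε ∧ ‖fderiv ℝ G x - fderiv ℝ f x‖ ≤ ε := by
    intro x hx
    have e1 := hdiff x hx
    have e2 : M ≤ ε := by nlinarith
    refine ⟨?_, e1.trans e2⟩
    have hFd : ∀ y ∈ unitCube d, HasFDerivWithinAt (fun y => G y - f y)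
        (fderiv ℝ G y - fderiv ℝ f y) (unitCube d) y := by
      intro y _
      have h1 : HasFDerivAt G (fderiv ℝ G y) y := (hG.differentiable (by norm_num) y).hasFDerivAt
      have h2 : HasFDerivAt f (fderiv ℝ f y) y := (hf.differentiable (by norm_num) y).hasFDerivAt
      exact (h1.sub h2).hasFDerivWithinAt
    have := hconv.norm_image_sub_le_of_norm_hasFDerivWithin_le hFd hdiff h0 hx
    have hG0 : G 0 - f 0 = 0 := by simp [G]
    rw [hG0, sub_zero, sub_zero] at this
    have hxn : ‖x‖ ≤ 1 * Real.sqrt d := by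
      refine norm_le_of_coord x 1 zero_le_one fun i => ?_
      rw [abs_le]; exact ⟨by linarith [(hx i).1], (hx i).2⟩
    rw [one_mul] at hxn
    calc _ ≤ M * ‖x‖ := this
      _ ≤ M * Real.sqrt d := by gcongr
      _ ≤ ε := by linarith
  have hcrit : critSet G = {x ∈ openCube d |
      (jac g x + Matrix.of fun k l => A (k, l)).rank ≤ m - 1} := by
    simp only [critSet, hjac]
  have hN : Nf f ε ≤ μH[(d:ℝ) - 1] (critSet G) := sInf_le ⟨G, hG, hadm, rfl⟩
  rw [hcrit] at hN
  refine hN.trans (hH.trans (ENNReal.ofReal_le_ofReal ?_))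
  have e : 2 * (d:ℝ) ^ (d + 4) * (s * Real.sqrt d / r) / a
      = 2 * d ^ 6 / (d + 1) ^ 4 * Real.sqrt d / r := by
    rw [ha_def]; field_simp; ring
  rw [e]
  gcongr
  rw [div_le_iff₀ (by positivity)]
  have : (d:ℝ) ^ 4 ≤ (d + 1) ^ 4 := by gcongr; linarith
  nlinarith [sq_nonneg (d:ℝ)]

/-- upper bound on `N_f(ε)` in terms of `Ψ_{Df}`.  The condition
"`ε > 0` small enough that `β_f⁻¹(ε) ≤ 1/√d`" is expressed through the
witness `δ = β_f⁻¹(ε)`, i.e. `β_f(δ) = ε`. -/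
theorem statement3 (d m : ℕ) (hm : 1 ≤ m) (hmd : m ≤ d)
    (f : E d → E m) (hf : ContDiff ℝ 1 f)
    (hnc : ¬ ∀ x ∈ unitCube d, ∀ y ∈ unitCube d, f x = f y)
    (γ : ℝ) (hγ : γ = 2 + 4 * (d:ℝ) ^ ((d:ℝ) + 1/2) * ((d:ℝ)+1)^4)
    (ε : ℝ) (hε : 0 < ε) (δ : ℝ) (hδ : 0 < δ) (hβ : betaf f δ = ε)
    (hsmall : δ ≤ 1 / Real.sqrt d) :
    Nf f ε ≤ ENNReal.ofReal ((d:ℝ) ^ ((3:ℝ)/2) * 2 ^ (3*d - 1) * (d.factorial : ℝ)) /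
      PsiInv (fderiv ℝ f) (unitCube d) (ε / γ) := by
  have hd : 1 ≤ d := hm.trans hmd
  have hdR : (1:ℝ) ≤ d := by exact_mod_cast hd
  have hd0 : (0:ℝ) < d := by linarith
  have hpow : (d:ℝ) ^ ((d:ℝ) + 1/2) = d ^ d * Real.sqrt d := by
    rw [Real.rpow_add hd0, Real.rpow_natCast, Real.sqrt_eq_rpow]
  have hsq : 1 ≤ Real.sqrt d := by rw [Real.one_le_sqrt]; exact hdR
  have hγ0 : 0 < γ := by rw [hγ, hpow]; positivity
  set s := ε / γ with hs_def
  have hs : 0 < s := by positivity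
  have hεs : ε = γ * s := by rw [hs_def]; field_simp
  have hpow2 : (d:ℝ) ^ ((3:ℝ)/2) = d * Real.sqrt d := by
    rw [show (3:ℝ)/2 = 1 + 1/2 by norm_num, Real.rpow_add hd0, Real.rpow_one, Real.sqrt_eq_rpow]
  have hK : Real.sqrt d * ((d + 1) * s + d ^ d * (d + 1) ^ 4 * s) ≤ ε := by
    rw [hεs, hγ, hpow]
    have h1 : (1:ℝ) ≤ d ^ d := one_le_pow₀ hdR
    have h2 : (d:ℝ) + 1 ≤ (d + 1) ^ 4 := le_self_pow₀ (by linarith) (by norm_num)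
    have h3 : (d:ℝ) + 1 ≤ d ^ d * (d + 1) ^ 4 := by nlinarith
    calc _ ≤ Real.sqrt d * (d ^ d * (d + 1) ^ 4 * s + d ^ d * (d + 1) ^ 4 * s) := by gcongr
      _ = (2 * (d ^ d * Real.sqrt d) * (d + 1) ^ 4) * s := by ring
      _ ≤ _ := by
          gcongr
          have : 0 ≤ (d:ℝ) ^ d * Real.sqrt d * (d + 1) ^ 4 := by positivity
          linarith
  set C : ℝ := (d:ℝ) ^ ((3:ℝ)/2) * 2 ^ (3*d - 1) * (d.factorial : ℝ) with hC
  have hCle : 2 * (d:ℝ) ^ 2 * Real.sqrt d ≤ C := by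
    rw [hC, hpow2]
    have h1 : 2 * d ≤ 2 ^ (3 * d - 1) := by
      have h : d < 2 ^ d := Nat.lt_two_pow_self
      calc 2 * d ≤ 2 * 2 ^ d := by omega
        _ = 2 ^ (d + 1) := by ring
        _ ≤ _ := Nat.pow_le_pow_right (by norm_num) (by omega)
    have h1' : 2 * (d:ℝ) ≤ 2 ^ (3 * d - 1) := by exact_mod_cast h1
    have h2 : (1:ℝ) ≤ d.factorial := by exact_mod_cast Nat.one_le_iff_ne_zero.2 d.factorial_ne_zero
    calc 2 * (d:ℝ) ^ 2 * Real.sqrt d = d * Real.sqrt d * (2 * d) * 1 := by ring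
      _ ≤ _ := by gcongr
  have hCpos : 0 < C := lt_of_lt_of_le (by positivity) hCle
  have key : ∀ r : ℝ, 0 < r → ENNReal.ofReal r < PsiInv (fderiv ℝ f) (unitCube d) s →
      Nf f ε * ENNReal.ofReal r ≤ ENNReal.ofReal C := by
    intro r hr hlt
    obtain ⟨δ', hδ', hlt'⟩ := lt_sSup_iff.1 hlt
    have h := main_bound hm hmd f hf r s ε hr hs (by
      intro x hx y hy hxy
      have := hδ' x hx y hy (by
        rw [edist_dist, dist_eq_norm]
        exact (ENNReal.ofReal_le_ofReal hxy).trans hlt'.le)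
      rwa [dist_eq_norm] at this) hK
    calc _ ≤ ENNReal.ofReal (2 * d ^ 2 * Real.sqrt d / r) * ENNReal.ofReal r := by gcongr
      _ = ENNReal.ofReal (2 * d ^ 2 * Real.sqrt d) := by
          rw [← ENNReal.ofReal_mul (by positivity)]; congr 1; field_simp
      _ ≤ _ := ENNReal.ofReal_le_ofReal hCle
  rw [ENNReal.le_div_iff_mul_le (Or.inr (by simpa using hCpos)) (Or.inr ENNReal.ofReal_ne_top)]
  refine ENNReal.mul_le_of_forall_lt fun u hu v hv => ?_
  have hvt : v ≠ ⊤ := hv.ne_top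
  rcases eq_or_ne v 0 with h0 | h0
  · simp [h0]
  · have hvr : 0 < v.toReal := ENNReal.toReal_pos h0 hvt
    have hve : ENNReal.ofReal v.toReal = v := ENNReal.ofReal_toReal hvt
    have := key v.toReal hvr (by rw [hve]; exact hv)
    rw [hve] at this
    exact (mul_le_mul_left hu.le v).trans this

end
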